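/- Let 𝕡 and Π be finite nonempty sets of policies, let π* be an optimal policy (V^{π*} = V* = max over all policies of V^π), and suppose d^π(s) > 0 for every π ∈ 𝕡 and every s ∈ S, so that C∞(𝕡) = max_{π∈𝕡} max_{s∈S} d^{π*}(s)/d^π(s) is finite. Define the policy completeness E(𝕡, Π) = max_{π∈𝕡} min_{π′∈Π} E_{s∼d^π}[max_{a∈A} Q^π(s,a) − Σ_{a∈A} Q^π(s,a)·π′(a|s)]. Then for every π ∈ 𝕡: V* − V^π ≤ C∞(𝕡)·( E(𝕡, Π)/(1−γ) + max_{π′∈Π} (∇_π V^π)ᵀ(π′ − π) ). -/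

import Mathlib

/-!
The proof rests on the performance difference lemma
`(1 - γ) (V^ρ - V^π) = ∑ s, d^ρ(s) ∑ a, ρ(a|s) (Q^π(s,a) - V^π(s))`, which follows from the Bellman
equation for `V^π` and the flow equation for the visitation measure `d^ρ` (`visitDist_flow`) tested
against the function `s ↦ V^π(s)`.

With `ρ` the optimal policy, averaging over actions is bounded by `max_a Q^π(s,a)`. The resulting
gap `max_a Q^π(s,a) - ∑ a, π(a|s) Q^π(s,a)` is nonnegative, so `d^ρ` may be exchanged for `d^π` at
the price of `C∞`. Finally, for the policy `π'` that realises the minimum in the completeness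
term, the gap splits into the gap of `π'`, bounded by the completeness, and
`(∇_π V^π)ᵀ(π' - π)`, bounded by its maximum.
-/

open Finset

noncomputable section

/-- `π` is a stochastic policy: `π s` is a probability distribution over actions. -/
def IsPolicy {S A : Type*} [Fintype A] (π : S → A → ℝ) : Prop :=
  (∀ s a, 0 ≤ π s a) ∧ ∀ s, ∑ a, π s a = 1

/-- `P` is a transition probability model: `P s a` is a distribution over next states. -/
def IsKernel {S A : Type*} [Fintype S] (P : S → A → S → ℝ) : Prop :=
  (∀ s a s', 0 ≤ P s a s') ∧ ∀ s a, ∑ s', P s a s' = 1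

/-- `d` is a probability distribution over states. -/
def IsDist {S : Type*} [Fintype S] (d : S → ℝ) : Prop :=
  (∀ s, 0 ≤ d s) ∧ ∑ s, d s = 1

/-- The Markov operator `P^π` induced by policy `π` acting on distributions over states:
`(P^π d)(s') = ∑_s ∑_a P(s'|s,a)·π(a|s)·d(s)`. -/
def markovStep {S A : Type*} [Fintype S] [Fintype A] (P : S → A → S → ℝ)
    (π : S → A → ℝ) (d : S → ℝ) : S → ℝ :=
  fun s' => ∑ s, ∑ a, P s a s' * π s a * d s

/-- The discounted state-visitation distribution
`d^π_μ(s) = (1−γ) ∑_{t≥0} γ^t Pr(s_t = s | π, s₀ ∼ μ)`. -/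
def visitDist {S A : Type*} [Fintype S] [Fintype A] (P : S → A → S → ℝ) (γ : ℝ)
    (π : S → A → ℝ) (μ : S → ℝ) : S → ℝ :=
  fun s => (1 - γ) * ∑' t : ℕ, γ ^ t * ((markovStep P π)^[t] μ) s

/-- The value function `V^π_μ = E[∑_{t≥0} γ^t r(s_t,a_t)]` with `s₀ ∼ μ`, actions from `π`. -/
def valueV {S A : Type*} [Fintype S] [Fintype A] (P : S → A → S → ℝ) (r : S → A → ℝ)
    (γ : ℝ) (π : S → A → ℝ) (μ : S → ℝ) : ℝ :=
  ∑' t : ℕ, γ ^ t * ∑ s, ((markovStep P π)^[t] μ) s * ∑ a, π s a * r s a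

/-- The state-action value function
`Q^π(s,a) = E[∑_{t≥0} γ^t r(s_t,a_t) | s₀ = s, a₀ = a, actions thereafter from π]`. -/
def valueQ {S A : Type*} [Fintype S] [Fintype A] [DecidableEq S] (P : S → A → S → ℝ)
    (r : S → A → ℝ) (γ : ℝ) (π : S → A → ℝ) (s : S) (a : A) : ℝ :=
  r s a + γ * ∑ s', P s a s' * valueV P r γ π (fun s'' => if s'' = s' then 1 else 0)

/-- The functional policy gradient `(∇_π V^π_μ)(s,a) = (1/(1−γ))·d^π_μ(s)·Q^π(s,a)`. -/
def gradV {S A : Type*} [Fintype S] [Fintype A] [DecidableEq S] (P : S → A → S → ℝ)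
    (r : S → A → ℝ) (γ : ℝ) (π : S → A → ℝ) (μ : S → ℝ) : S → A → ℝ :=
  fun s a => (1 / (1 - γ)) * visitDist P γ π μ s * valueQ P r γ π s a

/-- The pairing `xᵀ y = ∑_{s,a} x(s,a)·y(s,a)` on `ℝ^{S×A}`. -/
def dotSA {S A : Type*} [Fintype S] [Fintype A] (x y : S → A → ℝ) : ℝ :=
  ∑ s, ∑ a, x s a * y s a

/-- The norm `∥x∥_{∞,1} = max_{s∈S} ∑_{a∈A} |x(s,a)|` on `ℝ^{S×A}`. -/
def normInfOne {S A : Type*} [Fintype S] [Fintype A] [Nonempty S] (x : S → A → ℝ) : ℝ :=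
  ⨆ s, ∑ a, |x s a|

/-- The `ℓ₁` (total-variation) norm `∥d∥₁ = ∑_{s∈S} |d s|` on `ℝ^S`. -/
def normL1 {S : Type*} [Fintype S] (d : S → ℝ) : ℝ := ∑ s, |d s|

lemma hasSum_of_eq {f g : ℕ → ℝ} {x : ℝ} (hg : HasSum g x) (h : ∀ t, f t = g t) :
    HasSum f x :=
  (funext h : f = g) ▸ hg

lemma markovStep_isDist {S A : Type*} [Fintype S] [Fintype A] {P : S → A → S → ℝ}
    {π : S → A → ℝ} {d : S → ℝ} (hP : IsKernel P) (hπ : IsPolicy π) (hd : IsDist d) :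
    IsDist (markovStep P π d) := by
  refine ⟨fun s' => Finset.sum_nonneg fun s _ => Finset.sum_nonneg fun a _ =>
    mul_nonneg (mul_nonneg (hP.1 s a s') (hπ.1 s a)) (hd.1 s), ?_⟩
  unfold markovStep
  rw [Finset.sum_comm, ← hd.2]
  refine Finset.sum_congr rfl fun s _ => ?_
  rw [Finset.sum_comm]
  simp_rw [← Finset.sum_mul, hP.2, one_mul, hπ.2, one_mul]

lemma iterate_isDist {S A : Type*} [Fintype S] [Fintype A] {P : S → A → S → ℝ}
    {π : S → A → ℝ} {d : S → ℝ} (hP : IsKernel P) (hπ : IsPolicy π) (hd : IsDist d) (t : ℕ) :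
    IsDist ((markovStep P π)^[t] d) := by
  induction t with
  | zero => exact hd
  | succ t ih =>
    rw [Function.iterate_succ_apply']
    exact markovStep_isDist hP hπ ih

lemma summable_visit {S A : Type*} [Fintype S] [Fintype A] {P : S → A → S → ℝ}
    {π : S → A → ℝ} {d : S → ℝ} {γ : ℝ} (hγ : γ ∈ Set.Ico (0 : ℝ) 1)
    (hP : IsKernel P) (hπ : IsPolicy π) (hd : IsDist d) (s : S) :
    Summable fun t : ℕ => γ ^ t * ((markovStep P π)^[t] d) s := by
  refine Summable.of_nonneg_of_le
    (fun t => mul_nonneg (pow_nonneg hγ.1 t) ((iterate_isDist hP hπ hd t).1 s)) (fun t => ?_)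
    (summable_geometric_of_lt_one hγ.1 hγ.2)
  have h := iterate_isDist hP hπ hd t
  have h1 : ((markovStep P π)^[t] d) s ≤ 1 := by
    rw [← h.2]
    exact Finset.single_le_sum (fun i _ => h.1 i) (Finset.mem_univ s)
  exact mul_le_of_le_one_right (pow_nonneg hγ.1 t) h1

lemma visitDist_nonneg {S A : Type*} [Fintype S] [Fintype A] {P : S → A → S → ℝ}
    {π : S → A → ℝ} {d : S → ℝ} {γ : ℝ} (hγ : γ ∈ Set.Ico (0 : ℝ) 1)
    (hP : IsKernel P) (hπ : IsPolicy π) (hd : IsDist d) (s : S) :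
    0 ≤ visitDist P γ π d s :=
  mul_nonneg (sub_nonneg.2 hγ.2.le) (tsum_nonneg fun t =>
    mul_nonneg (pow_nonneg hγ.1 t) ((iterate_isDist hP hπ hd t).1 s))

lemma hasSum_visitDist {S A : Type*} [Fintype S] [Fintype A] {P : S → A → S → ℝ}
    {π : S → A → ℝ} {d : S → ℝ} {γ : ℝ} (hγ : γ ∈ Set.Ico (0 : ℝ) 1)
    (hP : IsKernel P) (hπ : IsPolicy π) (hd : IsDist d) (f : S → ℝ) :
    HasSum (fun t : ℕ => (1 - γ) * (γ ^ t * ∑ s, ((markovStep P π)^[t] d) s * f s))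
      (∑ s, visitDist P γ π d s * f s) := by
  have h : HasSum
      (fun t : ℕ => ∑ s, (1 - γ) * (γ ^ t * ((markovStep P π)^[t] d) s) * f s)
      (∑ s, visitDist P γ π d s * f s) :=
    hasSum_sum fun s _ => (((summable_visit hγ hP hπ hd s).hasSum).mul_left (1 - γ)).mul_right (f s)
  refine hasSum_of_eq h fun t => ?_
  rw [Finset.mul_sum, Finset.mul_sum]
  exact Finset.sum_congr rfl fun s _ => by ring

/-- Duality between the Markov operator on distributions and its action on functions. -/
lemma sum_markovStep_mul {S A : Type*} [Fintype S] [Fintype A] (P : S → A → S → ℝ)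
    (π : S → A → ℝ) (d f : S → ℝ) :
    ∑ s, markovStep P π d s * f s = ∑ s, d s * ∑ a, π s a * ∑ s', P s a s' * f s' := by
  unfold markovStep
  simp_rw [Finset.sum_mul, Finset.mul_sum]
  rw [Finset.sum_comm]
  refine Finset.sum_congr rfl fun s _ => ?_
  rw [Finset.sum_comm]
  refine Finset.sum_congr rfl fun a _ => Finset.sum_congr rfl fun s' _ => by ring

/-- The flow (balance) equation `d^π = (1 - γ) μ + γ P^π d^π`, tested against a function `f`. -/
lemma visitDist_flow {S A : Type*} [Fintype S] [Fintype A] {P : S → A → S → ℝ}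
    {π : S → A → ℝ} {d : S → ℝ} {γ : ℝ} (hγ : γ ∈ Set.Ico (0 : ℝ) 1)
    (hP : IsKernel P) (hπ : IsPolicy π) (hd : IsDist d) (f : S → ℝ) :
    ∑ s, visitDist P γ π d s * f s = (1 - γ) * ∑ s, d s * f s +
      γ * ∑ s, visitDist P γ π d s * ∑ a, π s a * ∑ s', P s a s' * f s' := by
  have h1 := hasSum_visitDist hγ hP hπ hd f
  have h2 := (hasSum_visitDist hγ hP hπ hd
    (fun s => ∑ a, π s a * ∑ s', P s a s' * f s')).mul_left γ
  have h3 := (hasSum_nat_add_iff' 1).2 h1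
  have h4 := h3.unique (by
    refine hasSum_of_eq h2 fun t => ?_
    rw [← sum_markovStep_mul, Function.iterate_succ_apply']
    ring)
  simp only [Finset.sum_range_one, pow_zero, one_mul, Function.iterate_zero, id] at h4
  linarith

lemma visitDist_value {S A : Type*} [Fintype S] [Fintype A] {P : S → A → S → ℝ}
    {π : S → A → ℝ} {d : S → ℝ} {γ : ℝ} (r : S → A → ℝ) (hγ : γ ∈ Set.Ico (0 : ℝ) 1)
    (hP : IsKernel P) (hπ : IsPolicy π) (hd : IsDist d) :
    (1 - γ) * valueV P r γ π d = ∑ s, visitDist P γ π d s * ∑ a, π s a * r s a := by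
  rw [← (hasSum_visitDist hγ hP hπ hd _).tsum_eq, tsum_mul_left]
  rfl

lemma isDist_dirac {S : Type*} [Fintype S] [DecidableEq S] (s : S) :
    IsDist (fun s'' : S => if s'' = s then (1 : ℝ) else 0) :=
  ⟨fun s' => by positivity, by simp⟩

lemma iterate_eq_sum_dirac {S A : Type*} [Fintype S] [Fintype A] [DecidableEq S]
    (P : S → A → S → ℝ) (π : S → A → ℝ) (d : S → ℝ) (t : ℕ) (s' : S) :
    ((markovStep P π)^[t] d) s' =
      ∑ s, d s * ((markovStep P π)^[t] (fun s'' => if s'' = s then 1 else 0)) s' := by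
  induction t generalizing s' with
  | zero => simp
  | succ t ih =>
    simp_rw [Function.iterate_succ_apply']
    simp only [markovStep] at ih ⊢
    simp_rw [ih, Finset.mul_sum]
    have hswap : ∀ s, ∑ a, ∑ i, P s a s' * π s a * (d i *
        ((markovStep P π)^[t] (fun s'' => if s'' = i then 1 else 0)) s) =
        ∑ i, ∑ a, P s a s' * π s a * (d i *
        ((markovStep P π)^[t] (fun s'' => if s'' = i then 1 else 0)) s) :=
      fun s => Finset.sum_comm
    simp_rw [hswap]
    rw [Finset.sum_comm]
    refine Finset.sum_congr rfl fun i _ => Finset.sum_congr rfl fun s _ =>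
      Finset.sum_congr rfl fun a _ => by ring

/-- The value is linear in the initial distribution. -/
lemma valueV_eq_sum {S A : Type*} [Fintype S] [Fintype A] [DecidableEq S] {P : S → A → S → ℝ}
    {π : S → A → ℝ} {d : S → ℝ} {γ : ℝ} (r : S → A → ℝ) (hγ : γ ∈ Set.Ico (0 : ℝ) 1)
    (hP : IsKernel P) (hπ : IsPolicy π) (hd : IsDist d) :
    valueV P r γ π d = ∑ s, d s * valueV P r γ π (fun s'' => if s'' = s then 1 else 0) := by
  have hne : 1 - γ ≠ 0 := (sub_pos.2 hγ.2).ne'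
  have h1 := hasSum_visitDist hγ hP hπ hd (fun s => ∑ a, π s a * r s a)
  have h2 := hasSum_sum (s := Finset.univ) fun s _ =>
    (hasSum_visitDist hγ hP hπ (isDist_dirac s) (fun s => ∑ a, π s a * r s a)).mul_left (d s)
  have h3 := h1.unique (by
    refine hasSum_of_eq h2 fun t => ?_
    simp_rw [iterate_eq_sum_dirac P π d t, Finset.sum_mul, Finset.mul_sum]
    rw [Finset.sum_comm]
    refine Finset.sum_congr rfl fun s _ => Finset.sum_congr rfl fun s' _ => ?_
    refine Finset.sum_congr rfl fun a _ => by ring)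
  rw [← visitDist_value r hγ hP hπ hd] at h3
  simp_rw [← visitDist_value r hγ hP hπ (isDist_dirac _)] at h3
  apply mul_left_cancel₀ hne
  rw [h3, Finset.mul_sum]
  exact Finset.sum_congr rfl fun s _ => by ring

/-- The Bellman equation `V^π(s) = ∑ a, π(a|s) Q^π(s,a)`. -/
lemma bellman {S A : Type*} [Fintype S] [Fintype A] [DecidableEq S] {P : S → A → S → ℝ}
    {π : S → A → ℝ} {γ : ℝ} (r : S → A → ℝ) (hγ : γ ∈ Set.Ico (0 : ℝ) 1)
    (hP : IsKernel P) (hπ : IsPolicy π) (s : S) :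
    valueV P r γ π (fun s'' => if s'' = s then 1 else 0) =
      ∑ a, π s a * valueQ P r γ π s a := by
  set δ : S → ℝ := fun s'' => if s'' = s then 1 else 0 with hδ
  set v : S → ℝ := fun s' => valueV P r γ π (fun s'' => if s'' = s' then 1 else 0) with hv
  have hδd : IsDist δ := isDist_dirac s
  have hstep := markovStep_isDist hP hπ hδd
  -- Splitting off the first term of the series gives `V_μ = ∑ μ R + γ V_{P^π μ}`.
  have h1 := hasSum_visitDist hγ hP hπ hδd (fun s => ∑ a, π s a * r s a)
  have h2 := (hasSum_visitDist hγ hP hπ hstep (fun s => ∑ a, π s a * r s a)).mul_left γ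
  have h3 := ((hasSum_nat_add_iff' 1).2 h1).unique (by
    refine hasSum_of_eq h2 fun t => ?_
    rw [Function.iterate_succ_apply]
    ring)
  rw [← visitDist_value r hγ hP hπ hδd, ← visitDist_value r hγ hP hπ hstep,
    valueV_eq_sum r hγ hP hπ hstep, sum_markovStep_mul P π δ v] at h3
  simp only [Finset.sum_range_one, pow_zero, one_mul, Function.iterate_zero, id, hδ,
    ite_mul, zero_mul, Finset.sum_ite_eq', Finset.mem_univ, if_true] at h3
  have hne : 1 - γ ≠ 0 := (sub_pos.2 hγ.2).ne'
  apply mul_left_cancel₀ hne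
  have h4 : ∑ a, π s a * valueQ P r γ π s a =
      ∑ a, π s a * r s a + γ * ∑ a, π s a * ∑ s', P s a s' * v s' := by
    rw [Finset.mul_sum, ← Finset.sum_add_distrib]
    refine Finset.sum_congr rfl fun a _ => ?_
    simp only [valueQ, hv]
    ring
  rw [h4]
  linarith

/-- The performance difference lemma, with `V^π(s)` written as `∑ a, π(a|s) Q^π(s,a)`. -/
lemma performance_difference {S A : Type*} [Fintype S] [Fintype A] [DecidableEq S]
    {P : S → A → S → ℝ} {π ρ : S → A → ℝ} {d : S → ℝ} {γ : ℝ} (r : S → A → ℝ)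
    (hγ : γ ∈ Set.Ico (0 : ℝ) 1) (hP : IsKernel P) (hπ : IsPolicy π) (hρ : IsPolicy ρ)
    (hd : IsDist d) :
    (1 - γ) * (valueV P r γ ρ d - valueV P r γ π d) =
      ∑ s, visitDist P γ ρ d s *
        (∑ a, ρ s a * valueQ P r γ π s a - ∑ a, π s a * valueQ P r γ π s a) := by
  set v : S → ℝ := fun s' => valueV P r γ π (fun s'' => if s'' = s' then 1 else 0) with hv
  have hflow := visitDist_flow hγ hP hρ hd v
  have hQ : ∀ s, ∑ a, ρ s a * valueQ P r γ π s a =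
      ∑ a, ρ s a * r s a + γ * ∑ a, ρ s a * ∑ s', P s a s' * v s' := by
    intro s
    rw [Finset.mul_sum, ← Finset.sum_add_distrib]
    refine Finset.sum_congr rfl fun a _ => ?_
    simp only [valueQ, hv]
    ring
  have hsum : ∑ s, visitDist P γ ρ d s *
        (∑ a, ρ s a * valueQ P r γ π s a - ∑ a, π s a * valueQ P r γ π s a) =
      ∑ s, visitDist P γ ρ d s * ∑ a, ρ s a * r s a +
        γ * ∑ s, visitDist P γ ρ d s * ∑ a, ρ s a * ∑ s', P s a s' * v s' -
        ∑ s, visitDist P γ ρ d s * v s := by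
    rw [Finset.mul_sum, ← Finset.sum_add_distrib, ← Finset.sum_sub_distrib]
    refine Finset.sum_congr rfl fun s _ => ?_
    rw [← bellman r hγ hP hπ s, hQ s]
    ring
  rw [hsum, hflow, mul_sub, visitDist_value r hγ hP hρ hd, valueV_eq_sum r hγ hP hπ hd]
  ring

lemma sum_mul_le_iSup {A : Type*} [Fintype A] {p q : A → ℝ} (hp : ∀ a, 0 ≤ p a)
    (hp1 : ∑ a, p a = 1) : ∑ a, p a * q a ≤ ⨆ a, q a := by
  calc ∑ a, p a * q a ≤ ∑ a, p a * ⨆ a, q a :=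
        Finset.sum_le_sum fun a _ =>
          mul_le_mul_of_nonneg_left (le_ciSup (Set.finite_range q).bddAbove a) (hp a)
    _ = ⨆ a, q a := by rw [← Finset.sum_mul, hp1, one_mul]

/-- **Gradient domination of the value function (Lemma `lem:dom`).**
Let `PP` and `PiW` be finite nonempty sets of policies, `πstar` an optimal policy, and
suppose `d^π(s) > 0` for all `π ∈ PP`, `s ∈ S`, so
`C∞(PP) = max_{π∈PP} max_s d^{πstar}(s)/d^π(s)` is finite. With policy completeness
`E(PP,PiW) = max_{π∈PP} min_{π'∈PiW} E_{s∼d^π}[max_a Q^π(s,a) − ∑_a Q^π(s,a)·π'(a|s)]`,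
for every `π ∈ PP`:
`V* − V^π ≤ C∞(PP)·( E(PP,PiW)/(1−γ) + max_{π'∈PiW} (∇_π V^π)ᵀ(π' − π) )`. -/
theorem gradient_domination_episodic {S A : Type*} [Fintype S] [Fintype A] [Nonempty S]
    [Nonempty A] [DecidableEq S]
    (P : S → A → S → ℝ) (r : S → A → ℝ) (γ : ℝ) (d₀ : S → ℝ)
    (hP : IsKernel P) (hr : ∀ s a, r s a ∈ Set.Icc (0 : ℝ) 1)
    (hγ : γ ∈ Set.Ico (0 : ℝ) 1) (hd₀ : IsDist d₀)
    (PP PiW : Finset (S → A → ℝ)) (hPPne : PP.Nonempty) (hPiWne : PiW.Nonempty)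
    (hPPpol : ∀ π ∈ PP, IsPolicy π) (hPiWpol : ∀ π' ∈ PiW, IsPolicy π')
    (πstar : S → A → ℝ) (hπstar : IsPolicy πstar)
    (hopt : ∀ π : S → A → ℝ, IsPolicy π → valueV P r γ π d₀ ≤ valueV P r γ πstar d₀)
    (hpos : ∀ π ∈ PP, ∀ s : S, 0 < visitDist P γ π d₀ s) :
    ∀ π ∈ PP,
      valueV P r γ πstar d₀ - valueV P r γ π d₀ ≤
        (PP.sup' hPPne fun π₁ => ⨆ s, visitDist P γ πstar d₀ s / visitDist P γ π₁ d₀ s) *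
          ((PP.sup' hPPne fun π₁ => PiW.inf' hPiWne fun π₂ =>
              ∑ s, visitDist P γ π₁ d₀ s *
                ((⨆ a, valueQ P r γ π₁ s a) - ∑ a, valueQ P r γ π₁ s a * π₂ s a)) / (1 - γ) +
            PiW.sup' hPiWne fun π₂ =>
              dotSA (gradV P r γ π d₀) fun s a => π₂ s a - π s a) := by
  intro π hπ
  have hπp := hPPpol π hπ
  have h1γ : 0 < 1 - γ := sub_pos.2 hγ.2
  set C := PP.sup' hPPne fun π₁ => ⨆ s, visitDist P γ πstar d₀ s / visitDist P γ π₁ d₀ s with hC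
  set E := PP.sup' hPPne fun π₁ => PiW.inf' hPiWne fun π₂ =>
    ∑ s, visitDist P γ π₁ d₀ s *
      ((⨆ a, valueQ P r γ π₁ s a) - ∑ a, valueQ P r γ π₁ s a * π₂ s a) with hE
  set G := PiW.sup' hPiWne fun π₂ => dotSA (gradV P r γ π d₀) fun s a => π₂ s a - π s a with hG
  have hratio : ∀ s, visitDist P γ πstar d₀ s / visitDist P γ π d₀ s ≤ C := fun s =>
    (le_ciSup (f := fun s => visitDist P γ πstar d₀ s / visitDist P γ π d₀ s)
      (Set.finite_range _).bddAbove s).trans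
      (Finset.le_sup' (fun π₁ => ⨆ s, visitDist P γ πstar d₀ s / visitDist P γ π₁ d₀ s) hπ)
  have hC0 : 0 ≤ C := by
    obtain ⟨s⟩ := ‹Nonempty S›
    exact (div_nonneg (visitDist_nonneg hγ hP hπstar hd₀ s) (hpos π hπ s).le).trans (hratio s)
  -- The policy of `PiW` that best approximates the greedy policy with respect to `Q^π`.
  obtain ⟨π₂, hπ₂, hmin⟩ := Finset.exists_mem_eq_inf' hPiWne fun π₂ =>
    ∑ s, visitDist P γ π d₀ s *
      ((⨆ a, valueQ P r γ π s a) - ∑ a, valueQ P r γ π s a * π₂ s a)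
  have hE' : ∑ s, visitDist P γ π d₀ s *
      ((⨆ a, valueQ P r γ π s a) - ∑ a, valueQ P r γ π s a * π₂ s a) ≤ E := by
    rw [← hmin]
    exact Finset.le_sup' (fun π₁ => PiW.inf' hPiWne fun π₂ =>
      ∑ s, visitDist P γ π₁ d₀ s *
        ((⨆ a, valueQ P r γ π₁ s a) - ∑ a, valueQ P r γ π₁ s a * π₂ s a)) hπ
  have hG' : dotSA (gradV P r γ π d₀) (fun s a => π₂ s a - π s a) ≤ G :=
    Finset.le_sup' (fun π₂ => dotSA (gradV P r γ π d₀) fun s a => π₂ s a - π s a) hπ₂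
  have hgrad : (1 - γ) * dotSA (gradV P r γ π d₀) (fun s a => π₂ s a - π s a) =
      ∑ s, visitDist P γ π d₀ s *
        (∑ a, valueQ P r γ π s a * π₂ s a - ∑ a, π s a * valueQ P r γ π s a) := by
    unfold dotSA gradV
    simp_rw [← Finset.sum_sub_distrib, Finset.mul_sum]
    refine Finset.sum_congr rfl fun s _ => Finset.sum_congr rfl fun a _ => ?_
    field_simp
  have key : (1 - γ) * (valueV P r γ πstar d₀ - valueV P r γ π d₀) ≤ C * (E + (1 - γ) * G) := by
    rw [performance_difference r hγ hP hπp hπstar hd₀]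
    calc _ ≤ ∑ s, C * (visitDist P γ π d₀ s *
          ((⨆ a, valueQ P r γ π s a) - ∑ a, π s a * valueQ P r γ π s a)) := by
          refine Finset.sum_le_sum fun s _ => ?_
          rw [← mul_assoc]
          exact (mul_le_mul_of_nonneg_left
            (sub_le_sub_right (sum_mul_le_iSup (hπstar.1 s) (hπstar.2 s)) _)
            (visitDist_nonneg hγ hP hπstar hd₀ s)).trans
            (mul_le_mul_of_nonneg_right ((div_le_iff₀ (hpos π hπ s)).1 (hratio s))
              (sub_nonneg.2 (sum_mul_le_iSup (hπp.1 s) (hπp.2 s))))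
      _ = C * (∑ s, visitDist P γ π d₀ s *
            ((⨆ a, valueQ P r γ π s a) - ∑ a, valueQ P r γ π s a * π₂ s a) +
          (1 - γ) * dotSA (gradV P r γ π d₀) (fun s a => π₂ s a - π s a)) := by
          rw [hgrad, ← Finset.mul_sum, ← Finset.sum_add_distrib]
          congr 1
          exact Finset.sum_congr rfl fun s _ => by ring
      _ ≤ C * (E + (1 - γ) * G) :=
          mul_le_mul_of_nonneg_left
            (add_le_add hE' (mul_le_mul_of_nonneg_left hG' h1γ.le)) hC0
  refine le_of_mul_le_mul_left (key.trans_eq ?_) h1γ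
  field_simp
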